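/- arXiv:1608.04112 — 3 statements merged into one kernel-verified Lean document; each statement's English description precedes it below -/
import Mathlib

section
/- Let n ∈ ℕ, let 𝔈 be a fall space of rank n, and let α ∈ ℝ with α > 0. Then 𝔈^α := {ε^α | ε ∈ 𝔈}, where ε^α denotes the pointwise power K ↦ ε(K)^α, is a fall space of rank n. -/
/-- A fall space of rank `n`: a set of bounded nonnegative functions `ℕⁿ → ℝ`
closed under addition, downward closed, and containing `K ↦ 2^(-h(K))` for some
polynomial `h` with natural coefficients. -/
def IsFallSpace (n : ℕ) (E : Set ((Fin n → ℕ) → ℝ)) : Prop :=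
  (∀ ε ∈ E, (∀ K, 0 ≤ ε K) ∧ ∃ C : ℝ, ∀ K, ε K ≤ C) ∧
  (∀ ε₁ ∈ E, ∀ ε₂ ∈ E, ε₁ + ε₂ ∈ E) ∧
  (∀ ε₁ ∈ E, ∀ ε₂ : (Fin n → ℕ) → ℝ, (∀ K, 0 ≤ ε₂ K) → (∀ K, ε₂ K ≤ ε₁ K) → ε₂ ∈ E) ∧
  (∃ h : MvPolynomial (Fin n) ℕ,
    (fun K => (2 : ℝ) ^ (-((MvPolynomial.eval K h : ℕ) : ℝ))) ∈ E)


theorem fall_smul {n : ℕ} {E : Set ((Fin n → ℕ) → ℝ)} (hE : IsFallSpace n E)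
    {ε : (Fin n → ℕ) → ℝ} (hε : ε ∈ E) (N : ℕ) : (fun K => ((N : ℝ) + 1) * ε K) ∈ E := by
  induction N with
  | zero => simpa using hε
  | succ N ih =>
    have h := hE.2.1 _ ih _ hε
    convert h using 1
    funext K
    simp only [Pi.add_apply]
    push_cast
    ring

theorem fall_pow_mem {n : ℕ} {E : Set ((Fin n → ℕ) → ℝ)} (hE : IsFallSpace n E)
    {α : ℝ} (hα : 0 < α) {ε g : (Fin n → ℕ) → ℝ} (hε : ε ∈ E) {c : ℝ} (hc : 0 ≤ c)
    (hg : ∀ K, 0 ≤ g K) (hle : ∀ K, g K ≤ c * ε K ^ α) :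
    ∃ ε ∈ E, g = fun K => ε K ^ α := by
  obtain ⟨N, hN⟩ := exists_nat_ge (c ^ α⁻¹)
  refine ⟨fun K => g K ^ α⁻¹, ?_, ?_⟩
  · refine hE.2.2.1 _ (fall_smul hE hε N) _ (fun K => Real.rpow_nonneg (hg K) _) (fun K => ?_)
    have h0 : 0 ≤ ε K := (hE.1 ε hε).1 K
    calc g K ^ α⁻¹ ≤ (c * ε K ^ α) ^ α⁻¹ :=
          Real.rpow_le_rpow (hg K) (hle K) (inv_nonneg.2 hα.le)
      _ = c ^ α⁻¹ * ε K := by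
          rw [Real.mul_rpow hc (Real.rpow_nonneg h0 _), Real.rpow_rpow_inv h0 hα.ne']
      _ ≤ ((N : ℝ) + 1) * ε K := mul_le_mul_of_nonneg_right (by linarith) h0
  · funext K
    exact (Real.rpow_inv_rpow (hg K) hα.ne').symm

/-- If `E` is a fall space of rank `n` and `α > 0`, then the set of pointwise
powers `E^α = {ε^α | ε ∈ E}` is also a fall space of rank `n`. -/
theorem stmt1 (n : ℕ) (E : Set ((Fin n → ℕ) → ℝ)) (hE : IsFallSpace n E)
    (α : ℝ) (hα : 0 < α) :
    IsFallSpace n {f | ∃ ε ∈ E, f = fun K => ε K ^ α} := by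
  refine ⟨?_, ?_, ?_, ?_⟩
  · rintro f ⟨ε, hε, rfl⟩
    obtain ⟨h0, C, hC⟩ := hE.1 ε hε
    exact ⟨fun K => Real.rpow_nonneg (h0 K) _, C ^ α,
      fun K => Real.rpow_le_rpow (h0 K) (hC K) hα.le⟩
  · rintro f₁ ⟨ε₁, h₁, rfl⟩ f₂ ⟨ε₂, h₂, rfl⟩
    have p₁ := (hE.1 _ h₁).1
    have p₂ := (hE.1 _ h₂).1
    refine fall_pow_mem hE hα (hE.2.1 _ h₁ _ h₂) (c := 2) (by norm_num) (fun K => ?_) (fun K => ?_)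
    · exact add_nonneg (Real.rpow_nonneg (p₁ K) _) (Real.rpow_nonneg (p₂ K) _)
    · have a : ε₁ K ^ α ≤ (ε₁ K + ε₂ K) ^ α :=
        Real.rpow_le_rpow (p₁ K) (by linarith [p₂ K]) hα.le
      have b : ε₂ K ^ α ≤ (ε₁ K + ε₂ K) ^ α :=
        Real.rpow_le_rpow (p₂ K) (by linarith [p₁ K]) hα.le
      simp only [Pi.add_apply]
      linarith
  · rintro f ⟨ε, hε, rfl⟩ g hg hle
    exact fall_pow_mem hE hα hε (c := 1) (by norm_num) hg (fun K => by simpa using hle K)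
  · obtain ⟨h, hh⟩ := hE.2.2.2
    obtain ⟨m, hm⟩ := exists_nat_ge α
    refine ⟨MvPolynomial.C m * h, ?_⟩
    refine fall_pow_mem hE hα hh (c := 1) (by norm_num) (fun K => by positivity) (fun K => ?_)
    rw [one_mul, ← Real.rpow_mul (by norm_num)]
    apply Real.rpow_le_rpow_of_exponent_le (by norm_num)
    rw [map_mul, MvPolynomial.eval_C]
    push_cast
    have h0 : (0 : ℝ) ≤ ((MvPolynomial.eval K h : ℕ) : ℝ) := Nat.cast_nonneg _
    nlinarith
end

section
/- Let n ≥ 1 and let q be a polynomial in n−1 variables with natural-number coefficients satisfying q(J) ≥ 2 for all J ∈ ℕ^(n−1). Then there exists a family {ω_q^(J,k)}_{(J,k)∈ℕ^(n−1)×ℕ} of probability distributions on ℕ such that: for every bounded ζ : ℕ^(n−1) × ℕ → ℝ satisfying ζ(J,k') ≤ ζ(J,k) whenever k' ≥ (k+2)^(⌊log₂ q(J)⌋) − 2, the function (J,k) ↦ | ζ(J,k) − Σ_{i∈ℕ} ω_q^(J,k)(i) · ζ(J, (k+2)^(⌊log₂ q(J)⌋) − 2 + i) | lies in FallU. -/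
/-- The fall space `FallU` of rank `n = m + 1` (with `ℕⁿ` identified with
`ℕᵐ × ℕ`): bounded nonnegative `ε : ℕᵐ × ℕ → ℝ` such that for some `M > 0`
and some polynomial `p` in `m` variables with natural coefficients with
`p(J) ≥ 4`, all partial sums `Σ_{2 ≤ k ≤ N} ε(J,k)/(k·log₂ k)` are at most
`M·log₂ log₂ p(J)`. -/
def FallU (m : ℕ) : Set ((Fin m → ℕ) × ℕ → ℝ) :=
  {ε | (∀ x, 0 ≤ ε x) ∧ (∃ C : ℝ, ∀ x, ε x ≤ C) ∧
    ∃ M : ℝ, 0 < M ∧ ∃ p : MvPolynomial (Fin m) ℕ,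
      (∀ J, 4 ≤ MvPolynomial.eval J p) ∧
      ∀ (J : Fin m → ℕ) (N : ℕ),
        (∑ k ∈ Finset.Icc 2 N, ε (J, k) / ((k : ℝ) * Real.logb 2 (k : ℝ)))
          ≤ M * Real.logb 2 (Real.logb 2 ((MvPolynomial.eval J p : ℕ) : ℝ))}

noncomputable def auxW (k : ℕ) : ℝ := Real.log (Real.log ((k : ℝ) + 2))

def auxT (a k : ℕ) : ℕ := (k + 2) ^ a - 2

noncomputable def auxU (k : ℕ) : ℝ := auxW (k + 1) - auxW k

noncomputable def auxOm (a k i : ℕ) : ℝ :=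
  if i < auxT a (k + 1) - auxT a k then auxU (auxT a k + i) / auxU k else 0

lemma auxT_add (a k : ℕ) (ha : 1 ≤ a) : auxT a k + 2 = (k + 2) ^ a := by
  have : k + 2 ≤ (k + 2) ^ a := Nat.le_self_pow (by omega) _
  unfold auxT; omega

lemma auxT_ge (a k : ℕ) (ha : 1 ≤ a) : k ≤ auxT a k := by
  have : k + 2 ≤ (k + 2) ^ a := Nat.le_self_pow (by omega) _
  unfold auxT; omega

lemma auxT_mono (a k : ℕ) : auxT a k ≤ auxT a (k + 1) := by
  have : (k + 2) ^ a ≤ (k + 1 + 2) ^ a := Nat.pow_le_pow_left (by omega) a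
  unfold auxT; omega

lemma auxU_lower (k : ℕ) : 1 / (((k : ℝ) + 3) * Real.log ((k : ℝ) + 3)) ≤ auxU k := by
  have hk : (0 : ℝ) ≤ k := Nat.cast_nonneg k
  have hA : 0 < Real.log ((k : ℝ) + 2) := Real.log_pos (by linarith)
  have hB : 0 < Real.log ((k : ℝ) + 3) := Real.log_pos (by linarith)
  have e : auxU k = - Real.log (Real.log ((k : ℝ) + 2) / Real.log ((k : ℝ) + 3)) := by
    rw [Real.log_div hA.ne' hB.ne']
    unfold auxU auxW
    push_cast
    rw [show (k : ℝ) + 1 + 2 = k + 3 by ring]; ring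
  have h1 := Real.log_le_sub_one_of_pos (div_pos hA hB)
  have h2 := Real.log_le_sub_one_of_pos
    (show 0 < ((k : ℝ) + 2) / ((k : ℝ) + 3) by positivity)
  rw [Real.log_div (by positivity) (by positivity)] at h2
  have h3 : ((k : ℝ) + 2) / ((k : ℝ) + 3) - 1 = - (1 / ((k : ℝ) + 3)) := by
    field_simp; ring
  have h4 : 1 / (((k : ℝ) + 3) * Real.log ((k : ℝ) + 3))
      ≤ 1 - Real.log ((k : ℝ) + 2) / Real.log ((k : ℝ) + 3) := by
    rw [← div_div, div_le_iff₀ hB, sub_mul, div_mul_cancel₀ _ hB.ne']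
    linarith
  linarith

lemma auxU_pos (k : ℕ) : 0 < auxU k := by
  refine lt_of_lt_of_le ?_ (auxU_lower k)
  have hk : (0 : ℝ) ≤ k := Nat.cast_nonneg k
  have hB : 0 < Real.log ((k : ℝ) + 3) := Real.log_pos (by linarith)
  positivity

lemma auxU_weight (k : ℕ) (hk : 2 ≤ k) : 1 / ((k : ℝ) * Real.logb 2 (k : ℝ)) ≤ 8 * auxU k := by
  have hk : (2 : ℝ) ≤ k := by exact_mod_cast hk
  have hA : 0 < Real.log (k : ℝ) := Real.log_pos (by linarith)
  have hB : 0 < Real.log ((k : ℝ) + 3) := Real.log_pos (by linarith)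
  have h2 : Real.log 2 ≤ 1 := by linarith [Real.log_two_lt_d9]
  have h2' : 0 < Real.log 2 := Real.log_pos (by norm_num)
  have h3 : Real.log ((k : ℝ) + 3) ≤ 3 * Real.log k := by
    have : Real.log ((k : ℝ) ^ 3) = 3 * Real.log k := by rw [Real.log_pow]; norm_num
    rw [← this]
    apply Real.log_le_log (by linarith)
    nlinarith [mul_nonneg (sub_nonneg.2 hk) (sub_nonneg.2 hk), sq_nonneg ((k:ℝ)), pow_pos (by linarith : (0:ℝ) < k) 3]
  have h4 := auxU_lower k
  refine le_trans ?_ (mul_le_mul_of_nonneg_left h4 (by norm_num))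
  have e : 1 / ((k : ℝ) * Real.logb 2 (k : ℝ)) = Real.log 2 / (k * Real.log k) := by
    unfold Real.logb; field_simp
  rw [e, mul_one_div, div_le_div_iff₀ (by positivity) (by positivity)]
  have h5 : ((k : ℝ) + 3) * Real.log ((k : ℝ) + 3) ≤ (5 / 2 * k) * (3 * Real.log k) :=
    mul_le_mul (by linarith) h3 hB.le (by linarith)
  have h6 : 0 ≤ (k : ℝ) * Real.log k := by positivity
  have h7 : 0 ≤ ((k : ℝ) + 3) * Real.log ((k : ℝ) + 3) := by positivity
  have hl : Real.log 2 ≤ 1 := h2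
  nlinarith [mul_le_mul_of_nonneg_right hl h7]

lemma auxW_T (a k : ℕ) (ha : 1 ≤ a) : auxW (auxT a k) = Real.log a + auxW k := by
  have h : ((auxT a k : ℕ) : ℝ) + 2 = ((k : ℝ) + 2) ^ a := by
    exact_mod_cast auxT_add a k ha
  have hk : (0 : ℝ) ≤ k := Nat.cast_nonneg k
  have hA : 0 < Real.log ((k : ℝ) + 2) := Real.log_pos (by linarith)
  have ha' : (a : ℝ) ≠ 0 := by positivity
  unfold auxW
  rw [h, Real.log_pow, Real.log_mul ha' hA.ne']

lemma auxU_sum (b c : ℕ) (h : b ≤ c) : ∑ j ∈ Finset.Ico b c, auxU j = auxW c - auxW b :=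
  Finset.sum_Ico_sub auxW h

lemma auxU_sum_T (a k : ℕ) (ha : 1 ≤ a) :
    ∑ j ∈ Finset.Ico (auxT a k) (auxT a (k + 1)), auxU j = auxU k := by
  rw [auxU_sum _ _ (auxT_mono a k), auxW_T a k ha, auxW_T a _ ha]
  unfold auxU; ring

lemma auxOm_tsum (a k : ℕ) (z : ℕ → ℝ) :
    HasSum (fun i => auxOm a k i * z (auxT a k + i))
      ((∑ j ∈ Finset.Ico (auxT a k) (auxT a (k + 1)), auxU j * z j) / auxU k) := by
  have : (∑ j ∈ Finset.Ico (auxT a k) (auxT a (k + 1)), auxU j * z j) / auxU k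
      = ∑ i ∈ Finset.range (auxT a (k + 1) - auxT a k), auxOm a k i * z (auxT a k + i) := by
    rw [Finset.sum_Ico_eq_sum_range, Finset.sum_div]
    refine Finset.sum_congr rfl fun i hi => ?_
    rw [auxOm, if_pos (Finset.mem_range.1 hi)]; ring
  rw [this]
  refine hasSum_sum_of_ne_finset_zero fun i hi => ?_
  rw [auxOm, if_neg (by simpa using hi), zero_mul]

lemma auxOm_hasSum (a k : ℕ) (ha : 1 ≤ a) : HasSum (auxOm a k) 1 := by
  have := auxOm_tsum a k (fun _ => 1)
  simpa [auxU_sum_T a k ha, (auxU_pos k).ne'] using this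

lemma auxOm_nonneg (a k i : ℕ) : 0 ≤ auxOm a k i := by
  unfold auxOm
  split_ifs
  · exact (div_pos (auxU_pos _) (auxU_pos _)).le
  · exact le_rfl

lemma aux_tele (a : ℕ) (z : ℕ → ℝ) (N : ℕ) :
    ∑ k ∈ Finset.range N, ∑ j ∈ Finset.Ico (auxT a k) (auxT a (k + 1)), auxU j * z j
      = ∑ j ∈ Finset.range (auxT a N), auxU j * z j
        - ∑ j ∈ Finset.range (auxT a 0), auxU j * z j := by
  rw [← Finset.sum_range_sub (fun n => ∑ j ∈ Finset.range (auxT a n), auxU j * z j)]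
  refine Finset.sum_congr rfl fun k _ => ?_
  rw [Finset.sum_Ico_eq_sub _ (auxT_mono a k)]

lemma aux_bd (z : ℕ → ℝ) (C : ℝ) (hC : ∀ k, |z k| ≤ C) (b c : ℕ) (h : b ≤ c) :
    |∑ j ∈ Finset.Ico b c, auxU j * z j| ≤ C * (auxW c - auxW b) := by
  rw [← auxU_sum b c h, Finset.mul_sum]
  refine (Finset.abs_sum_le_sum_abs _ _).trans (Finset.sum_le_sum fun j _ => ?_)
  rw [abs_mul, abs_of_pos (auxU_pos j), mul_comm]
  exact mul_le_mul_of_nonneg_right (hC j) (auxU_pos j).le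

noncomputable def auxE (a : ℕ) (z : ℕ → ℝ) (k : ℕ) : ℝ :=
  (∑ j ∈ Finset.Ico (auxT a k) (auxT a (k + 1)), auxU j * z j) / auxU k

lemma auxE_le (a : ℕ) (ha : 1 ≤ a) (z : ℕ → ℝ) (k : ℕ)
    (hz : ∀ k', auxT a k ≤ k' → z k' ≤ z k) : auxE a z k ≤ z k := by
  unfold auxE
  rw [div_le_iff₀ (auxU_pos k), ← auxU_sum_T a k ha, Finset.mul_sum]
  refine Finset.sum_le_sum fun j hj => ?_
  rw [mul_comm]
  exact mul_le_mul_of_nonneg_right (hz j (Finset.mem_Ico.1 hj).1) (auxU_pos j).le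

lemma auxE_abs (a : ℕ) (ha : 1 ≤ a) (z : ℕ → ℝ) (k : ℕ) (C : ℝ) (hC : ∀ k, |z k| ≤ C) :
    |auxE a z k| ≤ C := by
  unfold auxE
  rw [abs_div, abs_of_pos (auxU_pos k), div_le_iff₀ (auxU_pos k)]
  refine (aux_bd z C hC _ _ (auxT_mono a k)).trans ?_
  rw [← auxU_sum _ _ (auxT_mono a k), auxU_sum_T a k ha]

lemma aux_main (a : ℕ) (ha : 1 ≤ a) (z : ℕ → ℝ) (C : ℝ) (hC : ∀ k, |z k| ≤ C)
    (N : ℕ) : ∑ k ∈ Finset.range N, auxU k * (z k - auxE a z k) ≤ 2 * C * Real.log a := by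
  have h1 : ∀ k, auxU k * (z k - auxE a z k) = auxU k * z k
      - ∑ j ∈ Finset.Ico (auxT a k) (auxT a (k + 1)), auxU j * z j := by
    intro k
    rw [mul_sub, auxE, mul_div_cancel₀ _ (auxU_pos k).ne']
  simp_rw [h1]
  rw [Finset.sum_sub_distrib, aux_tele]
  have h2 := aux_bd z C hC 0 (auxT a 0) (Nat.zero_le _)
  have h3 := aux_bd z C hC N (auxT a N) (auxT_ge a N ha)
  rw [auxW_T a _ ha] at h2 h3
  rw [Finset.sum_Ico_eq_sub _ (auxT_ge a N ha)] at h3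
  rw [← Finset.range_eq_Ico] at h2
  have h2' := (abs_le.1 h2).2
  have h3' := (abs_le.1 h3).1
  ring_nf at h2' h3' ⊢
  linarith

lemma aux_weighted (a : ℕ) (ha : 1 ≤ a) (z : ℕ → ℝ) (C : ℝ) (hC : ∀ k, |z k| ≤ C)
    (hz : ∀ k k', auxT a k ≤ k' → z k' ≤ z k) (N : ℕ) :
    ∑ k ∈ Finset.Icc 2 N, |z k - auxE a z k| / ((k : ℝ) * Real.logb 2 (k : ℝ))
      ≤ 16 * C * Real.log a := by
  have hn : ∀ k, 0 ≤ z k - auxE a z k := fun k => sub_nonneg.2 (auxE_le a ha z k (hz k))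
  calc _ ≤ ∑ k ∈ Finset.Icc 2 N, 8 * (auxU k * (z k - auxE a z k)) := by
        refine Finset.sum_le_sum fun k hk => ?_
        rw [abs_of_nonneg (hn k), div_eq_mul_one_div, mul_comm, ← mul_assoc]
        exact mul_le_mul_of_nonneg_right (auxU_weight k (Finset.mem_Icc.1 hk).1) (hn k)
    _ ≤ ∑ k ∈ Finset.range (N + 1), 8 * (auxU k * (z k - auxE a z k)) := by
        refine Finset.sum_le_sum_of_subset_of_nonneg ?_ fun k _ _ => ?_
        · intro k hk
          have := (Finset.mem_Icc.1 hk).2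
          exact Finset.mem_range.2 (by omega)
        · exact mul_nonneg (by norm_num) (mul_nonneg (auxU_pos k).le (hn k))
    _ ≤ _ := by
        rw [← Finset.mul_sum]
        linarith [aux_main a ha z C hC (N + 1)]

/-- For any polynomial `q` in `n−1` variables with `q(J) ≥ 2`, there is a
family of probability distributions `ω_q^(J,k)` on `ℕ` such that for every
bounded `ζ` satisfying `ζ(J,k') ≤ ζ(J,k)` whenever
`k' ≥ (k+2)^⌊log₂ q(J)⌋ − 2`, the function
`(J,k) ↦ |ζ(J,k) − Σᵢ ω_q^(J,k)(i)·ζ(J,(k+2)^⌊log₂ q(J)⌋ − 2 + i)|`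
lies in `FallU`. -/
theorem stmt16 (m : ℕ) (q : MvPolynomial (Fin m) ℕ)
    (hq : ∀ J, 2 ≤ MvPolynomial.eval J q) :
    ∃ ω : (Fin m → ℕ) × ℕ → ℕ → ℝ,
      (∀ x, (∀ i, 0 ≤ ω x i ∧ ω x i ≤ 1) ∧ HasSum (ω x) 1) ∧
      ∀ ζ : (Fin m → ℕ) × ℕ → ℝ, (∃ C : ℝ, ∀ x, |ζ x| ≤ C) →
        (∀ (J : Fin m → ℕ) (k k' : ℕ),
          (k + 2) ^ ⌊Real.logb 2 ((MvPolynomial.eval J q : ℕ) : ℝ)⌋₊ - 2 ≤ k' →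
          ζ (J, k') ≤ ζ (J, k)) →
        (fun x : (Fin m → ℕ) × ℕ =>
          |ζ x - ∑' i : ℕ, ω x i *
            ζ (x.1, (x.2 + 2) ^ ⌊Real.logb 2 ((MvPolynomial.eval x.1 q : ℕ) : ℝ)⌋₊ - 2 + i)|)
          ∈ FallU m := by
  have ha : ∀ J, 1 ≤ ⌊Real.logb 2 ((MvPolynomial.eval J q : ℕ) : ℝ)⌋₊ := by
    intro J
    rw [Nat.one_le_floor_iff]
    have h : (2 : ℝ) ≤ ((MvPolynomial.eval J q : ℕ) : ℝ) := by exact_mod_cast hq J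
    rw [Real.le_logb_iff_rpow_le (by norm_num) (by linarith)]
    simpa using h
  refine ⟨fun x => auxOm ⌊Real.logb 2 ((MvPolynomial.eval x.1 q : ℕ) : ℝ)⌋₊ x.2, ?_, ?_⟩
  · intro x
    have hs := auxOm_hasSum _ x.2 (ha x.1)
    refine ⟨fun i => ⟨auxOm_nonneg _ _ _, ?_⟩, hs⟩
    exact le_hasSum hs i fun j _ => auxOm_nonneg _ _ _
  · rintro ζ ⟨C, hC⟩ hζ
    have hfun : (fun x : (Fin m → ℕ) × ℕ =>
          |ζ x - ∑' i : ℕ, auxOm ⌊Real.logb 2 ((MvPolynomial.eval x.1 q : ℕ) : ℝ)⌋₊ x.2 i *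
            ζ (x.1, (x.2 + 2) ^ ⌊Real.logb 2 ((MvPolynomial.eval x.1 q : ℕ) : ℝ)⌋₊ - 2 + i)|)
        = fun x => |ζ (x.1, x.2) - auxE ⌊Real.logb 2 ((MvPolynomial.eval x.1 q : ℕ) : ℝ)⌋₊
            (fun k => ζ (x.1, k)) x.2| := by
      funext x
      have := (auxOm_tsum ⌊Real.logb 2 ((MvPolynomial.eval x.1 q : ℕ) : ℝ)⌋₊ x.2
        (fun k => ζ (x.1, k))).tsum_eq
      unfold auxE
      rw [← this]
      rfl
    have hC0 : 0 ≤ C := (abs_nonneg _).trans (hC (0, 0))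
    refine hfun ▸ ⟨fun x => abs_nonneg _, ⟨2 * C, fun x => ?_⟩, 16 * C + 1, by positivity,
      q + MvPolynomial.C 2, fun J => ?_, fun J N => ?_⟩
    · have h1 := auxE_abs _ (ha x.1) (fun k => ζ (x.1, k)) x.2 C (fun k => hC _)
      have h2 := hC (x.1, x.2)
      refine (abs_sub _ _).trans ?_
      linarith
    · have := hq J
      simp only [map_add, MvPolynomial.eval_C]
      omega
    · have h := aux_weighted _ (ha J) (fun k => ζ (J, k)) C (fun k => hC _)
        (fun k k' hk => hζ J k k' hk) N
      refine h.trans ?_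
      have hq2 : (2 : ℝ) ≤ ((MvPolynomial.eval J q : ℕ) : ℝ) := by exact_mod_cast hq J
      have ha1 := ha J
      have hfl := Nat.floor_le (Real.logb_nonneg (b := 2) (by norm_num)
        (by linarith : (1 : ℝ) ≤ ((MvPolynomial.eval J q : ℕ) : ℝ)))
      set a := ⌊Real.logb 2 ((MvPolynomial.eval J q : ℕ) : ℝ)⌋₊ with hadef
      have ha1' : (1 : ℝ) ≤ a := by exact_mod_cast ha1
      have hp : Real.logb 2 ((MvPolynomial.eval J q : ℕ) : ℝ)
          ≤ Real.logb 2 ((MvPolynomial.eval J (q + MvPolynomial.C 2) : ℕ) : ℝ) := by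
        apply Real.logb_le_logb_of_le (by norm_num) (by linarith)
        simp only [map_add, MvPolynomial.eval_C]
        push_cast
        linarith
      have hL : Real.logb 2 a ≤ Real.logb 2
          (Real.logb 2 ((MvPolynomial.eval J (q + MvPolynomial.C 2) : ℕ) : ℝ)) :=
        Real.logb_le_logb_of_le (by norm_num) (by linarith) (hfl.trans hp)
      have hl0 : 0 ≤ Real.log a := Real.log_nonneg ha1'
      have hl : Real.log a ≤ Real.logb 2 a := by
        unfold Real.logb
        rw [le_div_iff₀ (Real.log_pos (by norm_num))]
        nlinarith [Real.log_two_lt_d9]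
      have := mul_le_mul_of_nonneg_left (hl.trans hL) (by positivity : 0 ≤ 16 * C + 1)
      linarith
end

section
/- Let n ≥ 1, let m ≥ 1 be a natural number, let p be a polynomial in n−1 variables with natural-number coefficients with p(J) ≥ 2 for all J ∈ ℕ^(n−1), and let ε : ℕ^(n−1) × ℕ → ℝ≥0 be bounded. Define q(J,k) := 2^(⌊log₂ p(J) · log₂ max(k,1)⌋^m). If the function (J,k) ↦ sup_{i∈ℕ} ε(J, q(J,k) + i) lies in FallU, then ε itself lies in FallU. (This is the purely analytic content of the paper's proposition that quasi-polynomial-time computability yields FallU-perfect estimation, in which ε(K) is the mean-squared error of an estimator P.) -/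
lemma aux_log_nat (a j : ℕ) (h : 2 ^ a ≤ j) : (a : ℝ) ≤ Real.logb 2 (j : ℝ) := by
  have h1 : ((2:ℝ) ^ a) ≤ (j : ℝ) := by exact_mod_cast h
  have hj : (0:ℝ) < j := lt_of_lt_of_le (by positivity) h1
  rw [Real.le_logb_iff_rpow_le (by norm_num) hj, Real.rpow_natCast]
  exact h1

lemma aux_log_nat' (b k : ℕ) (hk : 1 ≤ k) (h : k ≤ 2 ^ b) : Real.logb 2 (k : ℝ) ≤ b := by
  have h1 : (k : ℝ) ≤ ((2:ℝ) ^ b) := by exact_mod_cast h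
  have hj : (0:ℝ) < k := by exact_mod_cast hk
  rw [Real.logb_le_iff_le_rpow (by norm_num) hj, Real.rpow_natCast]
  exact h1

lemma aux_upper (f E : ℕ → ℝ) (hE : ∀ a, 0 ≤ E a)
    (hfE : ∀ a j, 2 ^ a ≤ j → f j ≤ E a) (B : ℕ) :
    ∑ j ∈ Finset.Ico 2 (2 ^ (B + 1)), f j / ((j : ℝ) * Real.logb 2 (j : ℝ))
      ≤ ∑ a ∈ Finset.Ico 1 (B + 1), E a / (a : ℝ) := by
  induction B with
  | zero => simp
  | succ B ih =>
    have h2 : 2 ≤ 2 ^ (B + 1) := by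
      rw [pow_succ]; have := Nat.one_le_two_pow (n := B); omega
    have h3 : 2 ^ (B + 1) ≤ 2 ^ (B + 1 + 1) := Nat.pow_le_pow_right (by norm_num) (by omega)
    rw [← Finset.sum_Ico_consecutive _ h2 h3, Finset.sum_Ico_succ_top (by omega)]
    refine add_le_add ih ?_
    have key : ∀ j ∈ Finset.Ico (2 ^ (B + 1)) (2 ^ (B + 1 + 1)),
        f j / ((j : ℝ) * Real.logb 2 (j : ℝ)) ≤ E (B + 1) / (2 ^ (B + 1) * ((B + 1 : ℕ) : ℝ)) := by
      intro j hj
      rw [Finset.mem_Ico] at hj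
      have h4 := aux_log_nat _ _ hj.1
      have h5 : ((2:ℝ) ^ (B + 1)) ≤ (j : ℝ) := by exact_mod_cast hj.1
      have h6 : (0:ℝ) < ((B + 1 : ℕ) : ℝ) := by positivity
      have h7 := hfE _ _ hj.1
      have h8 : (2:ℝ) ^ (B + 1) * ((B + 1 : ℕ) : ℝ) ≤ (j : ℝ) * Real.logb 2 (j : ℝ) := by
        gcongr
      exact div_le_div₀ (hE _) h7 (by positivity) h8
    refine (Finset.sum_le_sum key).trans ?_
    rw [Finset.sum_const, Nat.card_Ico, nsmul_eq_mul]
    have : 2 ^ (B + 1 + 1) - 2 ^ (B + 1) = 2 ^ (B + 1) := by rw [pow_succ 2 (B + 1)]; omega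
    rw [this]
    have h6 : (0:ℝ) < ((B + 1 : ℕ) : ℝ) := by positivity
    push_cast
    apply le_of_eq
    field_simp

lemma aux_lower (F G : ℕ → ℝ) (hG : ∀ a, 0 ≤ G a)
    (hFG : ∀ b k, 1 ≤ k → k ≤ 2 ^ b → G b ≤ F k) (B : ℕ) :
    ∑ b ∈ Finset.Ico 2 (B + 2), G b / (b : ℝ)
      ≤ 2 * ∑ k ∈ Finset.Ico 2 (2 ^ (B + 1)), F k / ((k : ℝ) * Real.logb 2 (k : ℝ)) := by
  induction B with
  | zero => simp
  | succ B ih =>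
    have h2 : 2 ≤ 2 ^ (B + 1) := by
      rw [pow_succ]; have := Nat.one_le_two_pow (n := B); omega
    have h3 : 2 ^ (B + 1) ≤ 2 ^ (B + 1 + 1) := Nat.pow_le_pow_right (by norm_num) (by omega)
    rw [← Finset.sum_Ico_consecutive _ h2 h3, show B + 1 + 2 = (B + 2) + 1 by ring,
      Finset.sum_Ico_succ_top (by omega), mul_add]
    refine add_le_add ih ?_
    have key : ∀ k ∈ Finset.Ico (2 ^ (B + 1)) (2 ^ (B + 1 + 1)),
        G (B + 2) / (2 ^ (B + 2) * ((B + 2 : ℕ) : ℝ)) ≤ F k / ((k : ℝ) * Real.logb 2 (k : ℝ)) := by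
      intro k hk
      rw [Finset.mem_Ico] at hk
      have h1 : 1 ≤ k := by omega
      have h4 := aux_log_nat' _ _ h1 hk.2.le
      have h4' := aux_log_nat _ _ hk.1
      have h5 : (k : ℝ) ≤ ((2:ℝ) ^ (B + 2)) := by exact_mod_cast hk.2.le
      have h6 : (0:ℝ) < ((B + 1 : ℕ) : ℝ) := by positivity
      have h7 := hFG _ _ h1 hk.2.le
      have hk0 : (0:ℝ) < k := by exact_mod_cast h1
      have hl0 : 0 < Real.logb 2 (k : ℝ) := lt_of_lt_of_le h6 h4'
      have h8 : (k : ℝ) * Real.logb 2 (k : ℝ) ≤ (2:ℝ) ^ (B + 2) * ((B + 2 : ℕ) : ℝ) := by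
        gcongr
      exact div_le_div₀ ((hG _).trans h7) h7 (by positivity) h8
    have := Finset.sum_le_sum key
    rw [Finset.sum_const, Nat.card_Ico, nsmul_eq_mul] at this
    have h9 : 2 ^ (B + 1 + 1) - 2 ^ (B + 1) = 2 ^ (B + 1) := by rw [pow_succ 2 (B + 1)]; omega
    rw [h9] at this
    refine le_trans (le_of_eq ?_) (mul_le_mul_of_nonneg_left this (by norm_num))
    have h6 : (0:ℝ) < ((B + 2 : ℕ) : ℝ) := by positivity
    push_cast
    field_simp
    ring

lemma aux_pow (m : ℕ) (b : ℝ) (hb : 1 ≤ b) : (b + 1) ^ m * b ≤ b ^ m * (b + 2 ^ m - 1) := by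
  induction m with
  | zero => simp
  | succ m ih =>
    have h1 : (1:ℝ) ≤ 2 ^ m := one_le_pow₀ (by norm_num)
    have h2 : (0:ℝ) ≤ b ^ m := by positivity
    calc (b + 1) ^ (m + 1) * b = ((b + 1) ^ m * b) * (b + 1) := by ring
      _ ≤ (b ^ m * (b + 2 ^ m - 1)) * (b + 1) := by gcongr
      _ = b ^ m * ((b + 2 ^ m - 1) * (b + 1)) := by ring
      _ ≤ b ^ m * (b * (b + 2 ^ (m + 1) - 1)) := by
        apply mul_le_mul_of_nonneg_left _ h2
        rw [pow_succ]
        nlinarith [mul_nonneg (sub_nonneg.2 h1) (sub_nonneg.2 hb)]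
      _ = _ := by ring

lemma aux_block (E : ℕ → ℝ) (C : ℝ) (hE : ∀ a, 0 ≤ E a) (hC : ∀ a, E a ≤ C)
    (hanti : ∀ a b, a ≤ b → E b ≤ E a) (A m : ℕ) (hA : 1 ≤ A) (B : ℕ) :
    ∑ a ∈ Finset.Ico 1 ((A * (B + 2)) ^ m), E a / (a : ℝ)
      ≤ C * (1 + m * Real.logb 2 ((2 * A : ℕ) : ℝ))
        + 2 ^ m * ∑ b ∈ Finset.Ico 2 (B + 2), E ((A * b) ^ m) / (b : ℝ) := by
  induction B with
  | zero =>
    have hC0 : 0 ≤ C := (hE 0).trans (hC 0)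
    simp only [zero_add, Finset.Ico_self, Finset.sum_empty, mul_zero, add_zero]
    set N := (A * 2) ^ m with hN
    have hN1 : 1 ≤ N := Nat.one_le_pow _ _ (by omega)
    have h1 : ∑ a ∈ Finset.Ico 1 N, E a / (a : ℝ) ≤ ∑ a ∈ Finset.Ico 1 (N + 1), C * ((a : ℝ))⁻¹ := by
      refine (Finset.sum_le_sum (g := fun a : ℕ => C * ((a : ℝ))⁻¹) ?_).trans ?_
      · intro a _
        rw [div_eq_mul_inv]
        exact mul_le_mul_of_nonneg_right (hC a) (by positivity)
      · refine Finset.sum_le_sum_of_subset_of_nonneg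
          (Finset.Ico_subset_Ico_right (by omega)) ?_
        intro a _ _
        positivity
    refine h1.trans ?_
    rw [← Finset.mul_sum]
    refine mul_le_mul_of_nonneg_left ?_ hC0
    have h2 : ∑ a ∈ Finset.Ico 1 (N + 1), ((a : ℝ))⁻¹ = ((harmonic N : ℚ) : ℝ) := by
      rw [harmonic, Finset.sum_Ico_eq_sum_range]
      push_cast
      simp [add_comm]
    rw [h2]
    refine (harmonic_le_one_add_log N).trans ?_
    have h3 : (1:ℝ) ≤ ((2 * A : ℕ) : ℝ) := by exact_mod_cast (by omega : 1 ≤ 2 * A)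
    have h4 : Real.log (N : ℝ) = m * Real.log ((2 * A : ℕ) : ℝ) := by
      rw [hN, Nat.cast_pow, Real.log_pow, mul_comm A 2]
    have h5 : Real.log ((2 * A : ℕ) : ℝ) ≤ Real.logb 2 ((2 * A : ℕ) : ℝ) := by
      rw [Real.logb]
      have h6 := Real.log_nonneg h3
      have h7 : 0 < Real.log 2 := Real.log_pos (by norm_num)
      have h8 : Real.log 2 ≤ 1 := by linarith [Real.log_two_lt_d9]
      rw [le_div_iff₀ h7]
      nlinarith
    rw [h4]
    gcongr
  | succ B ih =>
    have hb0 : 1 ≤ (A * (B + 2)) ^ m := Nat.one_le_pow _ _ (by positivity)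
    have h3 : (A * (B + 2)) ^ m ≤ (A * (B + 1 + 2)) ^ m := by gcongr; omega
    rw [← Finset.sum_Ico_consecutive _ hb0 h3, show B + 1 + 2 = (B + 2) + 1 by ring,
      Finset.sum_Ico_succ_top (by omega), mul_add ((2:ℝ) ^ m), ← add_assoc]
    refine add_le_add ih ?_
    set P := (A * (B + 2)) ^ m with hP
    have hP0 : (0:ℝ) < P := by exact_mod_cast hb0
    have key : ∀ a ∈ Finset.Ico P ((A * (B + 2 + 1)) ^ m), E a / (a : ℝ) ≤ E P / P := by
      intro a ha
      rw [Finset.mem_Ico] at ha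
      have : (P : ℝ) ≤ a := by exact_mod_cast ha.1
      exact div_le_div₀ (hE _) (hanti _ _ ha.1) hP0 this
    refine (Finset.sum_le_sum key).trans ?_
    rw [Finset.sum_const, Nat.card_Ico, nsmul_eq_mul, Nat.cast_sub (by simpa [add_assoc] using h3)]
    have hb := aux_pow m ((B + 2 : ℕ) : ℝ) (by push_cast; linarith [(Nat.cast_nonneg B : (0:ℝ) ≤ B)])
    set b : ℝ := ((B + 2 : ℕ) : ℝ) with hbdef
    have hbpos : 0 < b := by rw [hbdef]; positivity
    have hA0 : (0:ℝ) < A := by exact_mod_cast hA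
    have e1 : (P : ℝ) = A ^ m * b ^ m := by rw [hP, hbdef, ← mul_pow]; push_cast; ring
    have e2 : (((A * (B + 2 + 1)) ^ m : ℕ) : ℝ) = A ^ m * (b + 1) ^ m := by
      rw [hbdef, ← mul_pow]; push_cast; ring
    have h5 : ((((A * (B + 2 + 1)) ^ m : ℕ) : ℝ) - P) / P ≤ 2 ^ m / b := by
      rw [div_le_div_iff₀ hP0 hbpos, e1, e2]
      have h6 : (0:ℝ) ≤ b ^ m := by positivity
      have h7 : (b + 1) ^ m * b - b ^ m * b ≤ 2 ^ m * b ^ m := by nlinarith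
      have h8 : (0:ℝ) ≤ A ^ m := by positivity
      nlinarith [mul_le_mul_of_nonneg_left h7 h8]
    calc ((((A * (B + 2 + 1)) ^ m : ℕ) : ℝ) - P) * (E P / P)
        = E P * (((((A * (B + 2 + 1)) ^ m : ℕ) : ℝ) - P) / P) := by ring
      _ ≤ E P * (2 ^ m / b) := mul_le_mul_of_nonneg_left h5 (hE _)
      _ = _ := by ring

/-- Quasi-polynomial amplification: with
`q(J,k) = 2^(⌊log₂ p(J)·log₂ max(k,1)⌋^m)` for a polynomial `p ≥ 2` in `n−1`
variables and `m ≥ 1`, if `(J,k) ↦ sup_i ε(J, q(J,k)+i)` lies in `FallU` for a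
bounded nonnegative `ε`, then `ε` itself lies in `FallU`. -/
theorem stmt19 (m : ℕ) (hm : 1 ≤ m) (n : ℕ) (p : MvPolynomial (Fin n) ℕ)
    (hp : ∀ J, 2 ≤ MvPolynomial.eval J p)
    (ε : (Fin n → ℕ) × ℕ → ℝ)
    (hεnn : ∀ x, 0 ≤ ε x) (hεbd : ∃ C : ℝ, ∀ x, ε x ≤ C)
    (h : (fun x : (Fin n → ℕ) × ℕ => ⨆ i : ℕ,
        ε (x.1, 2 ^ (⌊Real.logb 2 ((MvPolynomial.eval x.1 p : ℕ) : ℝ) *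
            Real.logb 2 ((max x.2 1 : ℕ) : ℝ)⌋₊ ^ m) + i)) ∈ FallU n) :
    ε ∈ FallU n := by
  obtain ⟨C, hC⟩ := hεbd
  obtain ⟨hg0, -, M, hM, p', hp', hS⟩ := h
  have hC0 : 0 ≤ C := (hεnn (0, 0)).trans (hC _)
  refine ⟨hεnn, ⟨C, hC⟩, C * (1 + 3 * m) + 2 ^ m * (2 * M), ?_, p * p', ?_, ?_⟩
  · positivity
  · intro J
    rw [map_mul]
    nlinarith [hp J, hp' J]
  intro J N
  set L := Real.logb 2 ((MvPolynomial.eval J p : ℕ) : ℝ) with hL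
  have hL1 : 1 ≤ L := by
    have := aux_log_nat 1 (MvPolynomial.eval J p) (by simpa using hp J)
    simpa using this
  have hP2 : (2:ℝ) ≤ ((MvPolynomial.eval J p : ℕ) : ℝ) := by exact_mod_cast hp J
  have hP4 : (4:ℝ) ≤ ((MvPolynomial.eval J p' : ℕ) : ℝ) := by exact_mod_cast hp' J
  set L' := Real.logb 2 ((MvPolynomial.eval J p' : ℕ) : ℝ) with hL'
  have hL'2 : 2 ≤ L' := by
    have := aux_log_nat 2 (MvPolynomial.eval J p') (by simpa using hp' J)
    simpa using this
  have hprod : Real.logb 2 ((MvPolynomial.eval J (p * p') : ℕ) : ℝ) = L + L' := by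
    rw [map_mul, Nat.cast_mul, Real.logb_mul (by positivity) (by positivity)]
  rw [hprod]
  set D := Real.logb 2 (L + L') with hD
  have hD1 : 1 ≤ D := by
    rw [hD, Real.le_logb_iff_rpow_le (by norm_num) (by linarith)]
    norm_num; linarith
  have hDL : Real.logb 2 L ≤ D :=
    Real.logb_le_logb_of_le (by norm_num) (by linarith) (by linarith)
  have hDL' : Real.logb 2 L' ≤ D :=
    Real.logb_le_logb_of_le (by norm_num) (by linarith) (by linarith)
  set A := ⌈L⌉₊ with hA
  have hLA : L ≤ A := Nat.le_ceil L
  have hA1 : 1 ≤ A := by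
    have : (1:ℝ) ≤ A := hL1.trans hLA
    exact_mod_cast this
  have hAL : (A : ℝ) ≤ 2 * L := by
    have := Nat.ceil_lt_add_one (by linarith : 0 ≤ L)
    linarith
  have hA2 : Real.logb 2 ((2 * A : ℕ) : ℝ) ≤ 3 * D := by
    have h1 : ((2 * A : ℕ) : ℝ) ≤ 4 * L := by push_cast; linarith
    have h0 : (0:ℝ) < ((2 * A : ℕ) : ℝ) := by
      exact_mod_cast (by omega : 0 < 2 * A)
    refine (Real.logb_le_logb_of_le (by norm_num) h0 h1).trans ?_
    rw [Real.logb_mul (by norm_num) (by linarith)]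
    have : Real.logb 2 4 = 2 := by
      rw [show (4:ℝ) = 2 ^ (2:ℝ) by norm_num]
      exact Real.logb_rpow (by norm_num) (by norm_num)
    linarith
  -- the monotone envelope
  let E : ℕ → ℝ := fun a => ⨆ i : ℕ, ε (J, 2 ^ a + i)
  have hbdd : ∀ a : ℕ, BddAbove (Set.range fun i : ℕ => ε (J, 2 ^ a + i)) := by
    intro a
    refine ⟨C, ?_⟩
    rintro _ ⟨i, rfl⟩
    exact hC _
  have hfE : ∀ a j, 2 ^ a ≤ j → ε (J, j) ≤ E a := by
    intro a j haj
    have := le_ciSup (hbdd a) (j - 2 ^ a)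
    simpa [Nat.add_sub_cancel' haj] using this
  have hE0 : ∀ a, 0 ≤ E a := fun a => (hεnn _).trans (hfE a _ le_rfl)
  have hEC : ∀ a, E a ≤ C := fun a => ciSup_le fun i => hC _
  have hanti : ∀ a b, a ≤ b → E b ≤ E a := by
    intro a b hab
    refine ciSup_le fun i => hfE a _ ?_
    exact (Nat.pow_le_pow_right (by norm_num) hab).trans (Nat.le_add_right _ _)
  let F : ℕ → ℝ := fun k => E (⌊L * Real.logb 2 ((max k 1 : ℕ) : ℝ)⌋₊ ^ m)
  let G : ℕ → ℝ := fun b => E ((A * b) ^ m)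
  have hFG : ∀ b k, 1 ≤ k → k ≤ 2 ^ b → G b ≤ F k := by
    intro b k hk hkb
    apply hanti
    apply Nat.pow_le_pow_left
    rw [max_eq_left hk]
    apply Nat.floor_le_of_le
    push_cast
    have := aux_log_nat' b k hk hkb
    gcongr
    exact Real.logb_nonneg (by norm_num) (by exact_mod_cast hk)
  have hSF : ∀ N : ℕ, ∑ k ∈ Finset.Icc 2 N, F k / ((k : ℝ) * Real.logb 2 (k : ℝ))
      ≤ M * Real.logb 2 L' := fun N => hS J N
  have hnn : ∀ f : ℕ → ℝ, (∀ k, 0 ≤ f k) → ∀ k : ℕ,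
      0 ≤ f k / ((k : ℝ) * Real.logb 2 (k : ℝ)) := by
    intro f hf k
    have : 0 ≤ Real.logb 2 (k : ℝ) := by
      rcases Nat.eq_zero_or_pos k with rfl | hk
      · simp
      · exact Real.logb_nonneg (by norm_num) (by exact_mod_cast hk)
    have := hf k
    positivity
  have s1 : ∑ k ∈ Finset.Icc 2 N, ε (J, k) / ((k : ℝ) * Real.logb 2 (k : ℝ))
      ≤ ∑ k ∈ Finset.Ico 2 (2 ^ (N + 1)), ε (J, k) / ((k : ℝ) * Real.logb 2 (k : ℝ)) := by
    refine Finset.sum_le_sum_of_subset_of_nonneg ?_ fun k _ _ => hnn (fun k => ε (J, k)) (fun k => hεnn _) k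
    intro k hk
    rw [Finset.mem_Icc] at hk
    rw [Finset.mem_Ico]
    exact ⟨hk.1, lt_of_le_of_lt (by omega) (Nat.lt_two_pow_self (n := N + 1))⟩
  have s2 := aux_upper (fun j => ε (J, j)) E hE0 hfE N
  have s3 : ∑ a ∈ Finset.Ico 1 (N + 1), E a / (a : ℝ)
      ≤ ∑ a ∈ Finset.Ico 1 ((A * (N + 2)) ^ m), E a / (a : ℝ) := by
    refine Finset.sum_le_sum_of_subset_of_nonneg (Finset.Ico_subset_Ico_right ?_)
      fun a _ _ => div_nonneg (hE0 a) (Nat.cast_nonneg a)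
    have h1 : N + 2 ≤ A * (N + 2) := Nat.le_mul_of_pos_left _ hA1
    have h2 : A * (N + 2) ≤ (A * (N + 2)) ^ m := Nat.le_self_pow (by omega) _
    omega
  have s4 := aux_block E C hE0 hEC hanti A m hA1 N
  have s5 := aux_lower F G (fun b => hE0 _) hFG N
  have s6 : ∑ k ∈ Finset.Ico 2 (2 ^ (N + 1)), F k / ((k : ℝ) * Real.logb 2 (k : ℝ))
      ≤ M * Real.logb 2 L' := by
    refine le_trans ?_ (hSF (2 ^ (N + 1)))
    exact Finset.sum_le_sum_of_subset_of_nonneg Finset.Ico_subset_Icc_self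
      fun k _ _ => hnn F (fun k => hE0 _) k
  have s7 : ∑ b ∈ Finset.Ico 2 (N + 2), E ((A * b) ^ m) / (b : ℝ) ≤ 2 * (M * D) := by
    refine s5.trans ?_
    have : M * Real.logb 2 L' ≤ M * D := by gcongr
    linarith
  have s8 : C * (1 + m * Real.logb 2 ((2 * A : ℕ) : ℝ)) ≤ C * (D + m * (3 * D)) := by
    gcongr
  have s9 := mul_le_mul_of_nonneg_left s7 (by positivity : (0:ℝ) ≤ 2 ^ m)
  calc _ ≤ C * (D + m * (3 * D)) + 2 ^ m * (2 * (M * D)) := by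
        refine s1.trans (s2.trans (s3.trans (s4.trans ?_)))
        exact add_le_add s8 s9
    _ = _ := by ring
end
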